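/- Let k ≥ 0 be a finite integer. For every finite colouring of the set of all k-parameter words of finite length over the empty alphabet, there exists an infinite ω-parameter word W such that the set {W(U) : U a k-parameter word of finite length} is monochromatic. -/

import Mathlib

/-- A `k`-parameter word of finite length over the empty alphabet, recorded as the list
of parameter indices at each position: all indices are `< k`, every index `< k` occurs,
and before every occurrence of `λ_j` there is an occurrence of `λ_i` for each `i < j`
(first occurrences come in increasing order). -/
def IsPWord0 (k : ℕ) (w : List ℕ) : Prop :=
  (∀ i ∈ w, i < k) ∧ (∀ i < k, i ∈ w) ∧
  (∀ i j : ℕ, i < j → ∀ p : Fin w.length, w.get p = j →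
    ∃ q : Fin w.length, q < p ∧ w.get q = i)

/-- An infinite `ω`-parameter word over the empty alphabet: every parameter occurs, with
first occurrences in increasing order of index. -/
def InfPW0 (W : ℕ → ℕ) : Prop :=
  (∀ i, ∃ p, W p = i) ∧ ∀ i j, i < j → ∀ p, W p = j → ∃ q, q < p ∧ W q = i

/-- Substitution `W(u)`: position `p` receives `u_{W p}`, truncated just before the first
position carrying a parameter of index `≥ |u|`. -/
def substInf0 (W : ℕ → ℕ) (u : List ℕ) (h : ∃ p, u.length ≤ W p) : List ℕ :=
  (List.range (Nat.find h)).map fun p => u.getD (W p) 0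

/-!
Retracting the variable words over a finite alphabet `A` onto the words over `A` by `x ↦ x(a)`, for
each letter `a`, produces from one ultrafilter on left variable words a family of idempotents in a
single minimal left ideal of `β(A*)`. These satisfy `q a * q b = q a`, so the usual construction
along idempotents yields a word `w` and left variable words `x₀, x₁, …` such that all
`w x₀(a₀) ⋯ x_{m-1}(a_{m-1})`, including `w` itself, have the same colour.

Applied at every level with the first parameters as the alphabet, and fused, this gives for each `k`
a word `P` for which the colour of `P(VX)` depends only on `V` whenever the letters of `X` occur in
`V` and are among the first `k + 1`. A `(k + 1)`-parameter word is `V λ_k X` with `V` a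
`k`-parameter word, so its colour under `P` is that of `P(V λ_k)`, which is a colouring of the
`k`-parameter words `V`, and induction on `k` applies.
-/

open Filter

attribute [local instance] Ultrafilter.mul Ultrafilter.semigroup

/-- A nonempty closed left ideal of a topological semigroup. The minimal ones supply the idempotent
ultrafilters of the proof. -/
structure IsClosedLeftIdeal {M : Type*} [Mul M] [TopologicalSpace M] (L : Set M) : Prop where
  isClosed : IsClosed L
  nonempty : L.Nonempty
  mul_mem : ∀ x, ∀ y ∈ L, x * y ∈ L

theorem exists_minimal_isClosedLeftIdeal (M : Type*) [Nonempty M] [Mul M] [TopologicalSpace M]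
    [CompactSpace M] : ∃ L : Set M, Minimal IsClosedLeftIdeal L := by
  have univ_ideal : IsClosedLeftIdeal (Set.univ : Set M) :=
    ⟨isClosed_univ, Set.univ_nonempty, fun _ _ _ ↦ trivial⟩
  suffices chain_lower_bound : ∀ c ⊆ {L : Set M | IsClosedLeftIdeal L}, IsChain (· ⊆ ·) c →
      c.Nonempty → ∃ K ∈ {L : Set M | IsClosedLeftIdeal L}, ∀ N ∈ c, K ⊆ N from
    let ⟨L, _, hL⟩ := zorn_superset_nonempty _ chain_lower_bound Set.univ univ_ideal
    ⟨L, hL⟩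
  intro c hc hchain hne
  have := hne.to_subtype
  refine ⟨⋂₀ c, ⟨isClosed_sInter fun N hN ↦ (hc hN).isClosed, ?_, fun x y hy N hN ↦
    (hc hN).mul_mem x y (hy N hN)⟩, fun N hN ↦ Set.sInter_subset_of_mem hN⟩
  exact IsCompact.nonempty_sInter_of_directed_nonempty_isCompact_isClosed
    (IsChain.directedOn hchain.symm) (fun N hN ↦ (hc hN).nonempty)
    (fun N hN ↦ (hc hN).isClosed.isCompact) (fun N hN ↦ (hc hN).isClosed)

theorem mul_eq_left_of_minimal_isClosedLeftIdeal {M : Type*} [Semigroup M] [TopologicalSpace M]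
    [CompactSpace M] [T2Space M] (continuous_mul : ∀ r : M, Continuous (· * r)) {L : Set M}
    (hL : Minimal IsClosedLeftIdeal L) {z e : M} (hz : z ∈ L) (he : e ∈ L)
    (hee : IsIdempotentElem e) : z * e = z := by
  have image_ideal : IsClosedLeftIdeal ((· * e) '' L) := by
    refine ⟨(hL.prop.isClosed.isCompact.image (continuous_mul e)).isClosed,
      hL.prop.nonempty.image _, ?_⟩
    rintro x _ ⟨y, hy, rfl⟩
    exact ⟨x * y, hL.prop.mul_mem x y hy, mul_assoc x y e⟩
  have image_subset : (· * e) '' L ⊆ L := Set.image_subset_iff.2 fun y _ ↦ hL.prop.mul_mem y e he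
  obtain ⟨y, -, rfl⟩ := hL.le_of_le image_ideal image_subset hz
  exact (mul_assoc y e e).trans (congrArg (y * ·) hee)

theorem ultrafilter_map_mul {M N : Type*} [Mul M] [Mul N] (f : M →ₙ* N) (U V : Ultrafilter M) :
    (U * V).map f = U.map f * V.map f := by
  refine Ultrafilter.coe_inj.1 (Filter.ext' fun p ↦ ?_)
  change (∀ᶠ m in U, ∀ᶠ m' in V, p (f (m * m'))) ↔ ∀ᶠ m in U, ∀ᶠ m' in V, p (f m * f m')
  simp only [map_mul]

/-- The images `y.map (φ a)` will be idempotents of one minimal left ideal of `βN`, and such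
idempotents absorb each other on the right. -/
theorem exists_ultrafilter_map_mul_map_eq {ι M N : Type*} [Semigroup M] [Semigroup N] [Nonempty N]
    (incl : N →ₙ* M) (φ : ι → M →ₙ* N) (hφ : ∀ a n, φ a (incl n) = n) {I : Set M}
    (hI : I.Nonempty) (hI_mul : ∀ x ∈ I, ∀ y, x * y ∈ I) :
    ∃ y : Ultrafilter M, I ∈ y ∧ ∀ a b, y.map (φ a) * y.map (φ b) = y.map (φ a) := by
  obtain ⟨L, hL⟩ := exists_minimal_isClosedLeftIdeal (Ultrafilter N)
  obtain ⟨w, hw⟩ := hL.prop.nonempty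
  have mul_mem_right (u v : Ultrafilter M) (hu : ∀ᶠ x in u, x ∈ I) : I ∈ u * v :=
    (Ultrafilter.eventually_mul u v (· ∈ I)).2 <|
      hu.mono fun x hx ↦ Eventually.of_forall (hI_mul x hx)
  obtain ⟨_, ⟨x, hx, rfl⟩, idem⟩ := exists_idempotent_in_compact_subsemigroup
    Ultrafilter.continuous_mul_left ((· * w.map incl) '' {u : Ultrafilter M | I ∈ u})
    (Set.Nonempty.image _ ⟨pure hI.some, Ultrafilter.mem_pure.2 hI.some_mem⟩)
    ((ultrafilter_isClosed_basic I).isCompact.image (Ultrafilter.continuous_mul_left _)) (by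
      rintro _ ⟨u, hu, rfl⟩ _ ⟨v, -, rfl⟩
      exact ⟨u * w.map incl * v, mul_mem_right _ _ (mul_mem_right _ _ hu), mul_assoc _ _ _⟩)
  set y := x * w.map incl
  have map_mem (a : ι) : y.map (φ a) ∈ L := by
    have retract : φ a ∘ incl = id := funext (hφ a)
    rw [ultrafilter_map_mul, Ultrafilter.map_map, retract, Ultrafilter.map_id]
    exact hL.prop.mul_mem _ _ hw
  have map_idem (b : ι) : IsIdempotentElem (y.map (φ b)) := by
    rw [IsIdempotentElem, ← ultrafilter_map_mul, idem]
  exact ⟨y, mul_mem_right _ _ hx, fun a b ↦ mul_eq_left_of_minimal_isClosedLeftIdeal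
    Ultrafilter.continuous_mul_left hL (map_mem a) (map_mem b) (map_idem b)⟩

theorem exists_seq_mul_prod_mem {ι M N : Type*} [Finite ι] [Monoid N] {l : Filter M} [l.NeBot]
    {p : M → Prop} (hp : ∀ᶠ x in l, p x) (f : ι → M → N) {G : Set N}
    (hG : ∀ s ∈ G, ∀ a, ∀ᶠ x in l, s * f a x ∈ G) {s : N} (hs : s ∈ G) :
    ∃ x : ℕ → M, (∀ i, p (x i)) ∧
      ∀ a : List ι, s * (a.zipIdx.map fun q ↦ f q.1 (x q.2)).prod ∈ G := by
  have extend (F : Set N) (hF : F.Finite ∧ F ⊆ G) : ∃ x, p x ∧ ∀ t ∈ F, ∀ a, t * f a x ∈ G :=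
    (hp.and <| (eventually_all_finite hF.1).2 fun t ht ↦
      eventually_all.2 (hG t (hF.2 ht))).exists
  have := nonempty_of_neBot l
  choose! next hnext using extend
  let F : ℕ → Set N := fun n ↦
    (fun F ↦ Set.image2 (fun t a ↦ t * f a (next F)) F Set.univ)^[n] {s}
  have F_succ (n : ℕ) :
      F (n + 1) = Set.image2 (fun t a ↦ t * f a (next (F n))) (F n) Set.univ :=
    Function.iterate_succ_apply' ..
  have F_spec (n : ℕ) : (F n).Finite ∧ F n ⊆ G := by
    induction n with
    | zero => exact ⟨Set.finite_singleton s, Set.singleton_subset_iff.2 hs⟩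
    | succ n ih =>
      rw [F_succ]
      exact ⟨ih.1.image2 _ Set.finite_univ,
        Set.image2_subset_iff.2 fun t ht a _ ↦ (hnext _ ih).2 t ht a⟩
  have prod_mem (a : List ι) :
      s * (a.zipIdx.map fun q ↦ f q.1 (next (F q.2))).prod ∈ F a.length := by
    induction a using List.reverseRecOn with
    | nil => simp [F]
    | append_singleton a b ih =>
      rw [List.length_append, List.length_singleton, F_succ]
      exact ⟨_, ih, b, trivial, by simp [List.zipIdx_append, mul_assoc]⟩
  exact ⟨fun i ↦ next (F i), fun i ↦ (hnext _ (F_spec i)).1, fun a ↦ (F_spec _).2 (prod_mem a)⟩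

theorem eventually_and_forall_eventually_mul {ι N : Type*} [Finite ι] [Semigroup N]
    {q : ι → Ultrafilter N} (hq : ∀ a b, q a * q b = q a) {P : N → Prop} {s : N} {a : ι}
    (h : ∀ᶠ t in q a, P (s * t)) :
    ∀ᶠ t in q a, P (s * t) ∧ ∀ b, ∀ᶠ t' in q b, P (s * t * t') := by
  refine h.and (eventually_all.2 fun b ↦ ?_)
  rw [← hq a b, Ultrafilter.eventually_mul] at h
  simpa only [mul_assoc] using h

theorem exists_seq_mul_prod_monochromatic {ι M N C : Type*} [Finite ι] [Nonempty ι] [Finite C]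
    [Semigroup M] [Monoid N] (incl : N →ₙ* M) (φ : ι → M →ₙ* N) (hφ : ∀ a n, φ a (incl n) = n)
    {I : Set M} (hI : I.Nonempty) (hI_mul : ∀ x ∈ I, ∀ y, x * y ∈ I) (χ : N → C) :
    ∃ (s : N) (x : ℕ → M) (c : C), (∀ i, x i ∈ I) ∧
      ∀ a : List ι, χ (s * (a.zipIdx.map fun q ↦ φ q.1 (x q.2)).prod) = c := by
  obtain ⟨y, hy, absorb⟩ := exists_ultrafilter_map_mul_map_eq incl φ hφ hI hI_mul
  obtain ⟨b⟩ := ‹Nonempty ι›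
  obtain ⟨c, hc⟩ : ∃ c, ∀ᶠ x in y, χ (1 * φ b x) = c :=
    Ultrafilter.eventually_exists_iff.1 (Eventually.of_forall fun _ ↦ ⟨_, rfl⟩)
  let G : Set N := {s | χ s = c ∧ ∀ a, ∀ᶠ x in y, χ (s * φ a x) = c}
  have eventually_mem_G {s : N} {a : ι} (h : ∀ᶠ x in y, χ (s * φ a x) = c) :
      ∀ᶠ x in y, s * φ a x ∈ G :=
    eventually_and_forall_eventually_mul absorb (P := fun t ↦ χ t = c) h
  obtain ⟨x₀, hx₀⟩ := (eventually_mem_G hc).exists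
  obtain ⟨x, hxI, hx⟩ :=
    exists_seq_mul_prod_mem hy (fun a ↦ φ a) (fun _ hs a ↦ eventually_mem_G (hs.2 a)) hx₀
  exact ⟨_, x, c, hxI, fun a ↦ (hx a).1⟩

/-- A left variable word over the alphabet `A` is `none :: y` with `y : List (Option A)`, where
`none` is the variable. -/
theorem exists_leftVariableWords_monochromatic {A C : Type*} [Finite A] [Nonempty A] [Finite C]
    (χ : List A → C) : ∃ (w : List A) (x : ℕ → List (Option A)) (c : C), ∀ a : List A,
      χ (w ++ a.zipIdx.flatMap fun q ↦ q.1 :: (x q.2).map (·.getD q.1)) = c := by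
  let subst (a : A) : FreeMonoid (Option A) →* FreeMonoid A := FreeMonoid.map (·.getD a)
  have subst_map_some (a : A) (w : FreeMonoid A) : subst a (FreeMonoid.map some w) = w :=
     FreeMonoid.map_map.trans (DFunLike.congr_fun FreeMonoid.map_id w)
  obtain ⟨w, x, c, hx, hc⟩ := exists_seq_mul_prod_monochromatic
    (FreeMonoid.map some : FreeMonoid A →* FreeMonoid (Option A)).toMulHom
    (fun a ↦ (subst a).toMulHom) subst_map_some
    (I := Set.range (FreeMonoid.of none * ·)) (Set.range_nonempty _)
    (by rintro _ ⟨x, rfl⟩ y; exact ⟨x * y, (mul_assoc _ _ _).symm⟩)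
    (fun T ↦ χ T.toList)
  choose y hy using hx
  refine ⟨w.toList, fun i ↦ (y i).toList, c, fun a ↦ ?_⟩
  have toList_subst (q : A × ℕ) :
      (subst q.1 (x q.2)).toList = q.1 :: (y q.2).toList.map (·.getD q.1) := by
    rw [← hy, FreeMonoid.toList_map]
    rfl
  rw [← hc a, FreeMonoid.toList_mul, FreeMonoid.toList_prod, List.map_map, List.flatMap_def]
  exact congrArg (fun T ↦ χ (w.toList ++ T.flatten)) <| List.map_congr_left fun q _ ↦
    (toList_subst q).symm

theorem getD_mem_cons {α : Type*} (l : List α) (i : ℕ) (d : α) : l.getD i d ∈ d :: l := by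
  rcases lt_or_ge i l.length with h | h
  · rw [List.getD_eq_getElem l d h]
    exact List.mem_cons_of_mem d (List.getElem_mem h)
  · rw [List.getD_eq_default l d h]
    exact List.mem_cons_self

theorem map_getD_range {α : Type*} (l : List α) (d : α) :
    (List.range l.length).map (l.getD · d) = l :=
  List.ext_getElem (by simp) fun i _ h ↦ by simp [h]

/-- An `ω`-parameter word `W`, encoded as its substitution operator `U ↦ W(U)` on finite words.
Composition of words is then composition of functions. -/
structure OmegaWord where
  toFun : List ℕ → List ℕ
  map_comm (f : ℕ → ℕ) (u : List ℕ) : toFun (u.map f) = (toFun u).map f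
  apply_subset (u : List ℕ) : toFun u ⊆ u
  concat_isPrefix (u : List ℕ) (a : ℕ) (v : List ℕ) : toFun u ++ [a] <+: toFun (u ++ a :: v)

namespace OmegaWord

instance : CoeFun OmegaWord fun _ ↦ List ℕ → List ℕ := ⟨toFun⟩

theorem exists_apply_append_cons (P : OmegaWord) (u : List ℕ) (a : ℕ) (v : List ℕ) :
    ∃ s ⊆ u ++ a :: v, P (u ++ a :: v) = P u ++ a :: s := by
  obtain ⟨s, hs⟩ := P.concat_isPrefix u a v
  rw [List.append_assoc, List.singleton_append] at hs
  have subset := P.apply_subset (u ++ a :: v)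
  rw [← hs] at subset
  exact ⟨s, fun x hx ↦ subset (by simp [hx]), hs.symm⟩

theorem apply_isPrefix (P : OmegaWord) (u v : List ℕ) : P u <+: P (u ++ v) := by
  cases v with
  | nil => simp
  | cons a v => exact (List.prefix_append _ _).trans (P.concat_isPrefix u a v)

theorem subset_apply (P : OmegaWord) (u : List ℕ) : u ⊆ P u := by
  intro a ha
  obtain ⟨v, w, rfl⟩ := List.append_of_mem ha
  exact (P.concat_isPrefix v a w).subset (by simp)

/-- The identity `ω`-parameter word `λ₀ λ₁ λ₂ …`. -/
protected def id : OmegaWord where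
  toFun u := u
  map_comm _ _ := rfl
  apply_subset := List.Subset.refl
  concat_isPrefix u a v := by simp

/-- The substitution of the word `Q` into the word `P`. -/
def comp (P Q : OmegaWord) : OmegaWord where
  toFun u := P (Q u)
  map_comm f u := by rw [Q.map_comm, P.map_comm]
  apply_subset u := List.Subset.trans (P.apply_subset _) (Q.apply_subset u)
  concat_isPrefix u a v := by
    obtain ⟨s, -, hs⟩ := Q.exists_apply_append_cons u a v
    rw [hs]
    exact P.concat_isPrefix _ _ _

/-- The limit of a fusion sequence: passing from `S m` to `S (m + 1)` does not change the part of
the word before the first occurrence of `λ_{m - 1}`. -/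
def limit (S : ℕ → OmegaWord) (hS : ∀ m u, u.length < m → S (m + 1) u = S m u) : OmegaWord where
  toFun u := S (u.length + 1) u
  map_comm f u := by rw [List.length_map, (S _).map_comm]
  apply_subset u := (S _).apply_subset u
  concat_isPrefix u a v := by
    have stable : S ((u ++ a :: v).length + 1) u = S (u.length + 1) u :=
      Nat.le_induction (m := u.length + 1) (P := fun m _ ↦ S m u = S (u.length + 1) u) rfl
        (fun m hm ih ↦ (hS m u hm).trans ih) _ (by simp)
    rw [← stable]
    exact (S _).concat_isPrefix u a v

theorem limit_apply {S : ℕ → OmegaWord} {hS : ∀ m u, u.length < m → S (m + 1) u = S m u}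
    {m : ℕ} {u : List ℕ} (hm : u.length < m) : limit S hS u = S m u := by
  induction m, hm using Nat.le_induction with
  | base => rfl
  | succ m hm ih => rw [ih, hS m u hm]

/-- Substitution of a finite word into `λ₀ b₀ λ₁ b₁ λ₂ b₂ …`, where an entry `j < i` of the block
`b i` stands for `λ_j` and every entry `j ≥ i` stands for `λ_i`. -/
def substBlocks (b : ℕ → List ℕ) (u : List ℕ) : List ℕ :=
  u.zipIdx.flatMap fun q ↦ q.1 :: (b q.2).map ((u.take q.2).getD · q.1)

theorem substBlocks_append (b : ℕ → List ℕ) (u v : List ℕ) :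
    substBlocks b (u ++ v) = substBlocks b u ++ (v.zipIdx u.length).flatMap fun q ↦
      q.1 :: (b q.2).map (((u ++ v).take q.2).getD · q.1) := by
  rw [substBlocks, substBlocks, List.zipIdx_append, List.flatMap_append, zero_add]
  congr 1
  refine List.flatMap_congr fun q hq ↦ ?_
  rw [List.take_append_of_le_length (List.snd_lt_of_mem_zipIdx hq).le]

/-- The word `λ₀ b₀ λ₁ b₁ λ₂ b₂ …` with the given blocks. -/
def ofBlocks (b : ℕ → List ℕ) : OmegaWord where
  toFun := substBlocks b
  map_comm f u := by
    simp only [substBlocks, List.zipIdx_map, List.flatMap_map, List.map_flatMap, List.map_cons,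
      List.map_map, Prod.map_fst, Prod.map_snd, id, ← List.map_take, Function.comp_def,
      List.getD_map]
  apply_subset u x hx := by
    obtain ⟨⟨a, i⟩, hai, hx⟩ := List.mem_flatMap.1 hx
    have ha : a ∈ u := List.fst_mem_of_mem_zipIdx hai
    rcases List.mem_cons.1 hx with rfl | hx
    · exact ha
    obtain ⟨j, -, rfl⟩ := List.mem_map.1 hx
    exact List.cons_subset.2 ⟨ha, List.take_subset i u⟩ (getD_mem_cons _ j a)
  concat_isPrefix u a v := by
    rw [substBlocks_append, List.zipIdx_cons, List.flatMap_cons, List.cons_append]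
    exact (List.prefix_append_right_inj _).2 (List.prefix_append [a] _)

theorem ofBlocks_apply_of_forall_eq_nil {b : ℕ → List ℕ} {u : List ℕ}
    (h : ∀ i < u.length, b i = []) : ofBlocks b u = u := by
  have singleton_blocks : ofBlocks b u = u.zipIdx.flatMap fun q ↦ [q.1] :=
    List.flatMap_congr fun q hq ↦ by rw [h _ (List.snd_lt_of_mem_zipIdx hq), List.map_nil]
  rw [singleton_blocks, ← List.map_eq_flatMap, List.zipIdx_map_fst]

/-- The blocks of the word `λ₀ … λₙ w x₀ x₁ …`, where the letters of `w` and `xᵢ` are read as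
`λ₀, …, λₙ` and each `xᵢ` is preceded by `λ_{n+1+i}`, as which its variable `none` is read. -/
def headBlocks {n : ℕ} (w : List (Fin (n + 1))) (x : ℕ → List (Option (Fin (n + 1)))) (i : ℕ) :
    List ℕ :=
  if i < n then [] else if i = n then w.map Fin.val
    else (x (i - (n + 1))).map (Option.elim · i Fin.val)

section headBlocks

variable {n : ℕ} (w : List (Fin (n + 1))) (x : ℕ → List (Option (Fin (n + 1))))

theorem ofBlocks_headBlocks_apply_of_length_lt {u : List ℕ} (hu : u.length < n + 1) :
    ofBlocks (headBlocks w x) u = u :=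
  ofBlocks_apply_of_forall_eq_nil fun i hi ↦ if_pos (by omega)

theorem ofBlocks_headBlocks_apply_ofFn (σ : Fin (n + 1) → ℕ) :
    ofBlocks (headBlocks w x) (List.ofFn σ) = List.ofFn σ ++ w.map σ := by
  have block : headBlocks w x n = w.map Fin.val := by simp [headBlocks]
  have decode (t : Fin (n + 1)) :
      (List.ofFn fun i : Fin n ↦ σ i.castSucc).getD t (σ (Fin.last n)) = σ t := by
    cases t using Fin.lastCases <;> simp
  have initial : substBlocks (headBlocks w x) (List.ofFn fun i : Fin n ↦ σ i.castSucc) =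
      List.ofFn fun i : Fin n ↦ σ i.castSucc :=
    ofBlocks_headBlocks_apply_of_length_lt w x (by simp)
  change substBlocks _ _ = _
  rw [List.ofFn_succ_last, substBlocks_append, initial]
  simp only [List.zipIdx_cons, List.zipIdx_nil, List.flatMap_cons, List.flatMap_nil,
    List.append_nil, List.length_ofFn, block, List.map_map, Function.comp_def,
    List.take_left' List.length_ofFn, decode, List.append_assoc, List.singleton_append]

theorem ofBlocks_headBlocks_apply_ofFn_append (σ : Fin (n + 1) → ℕ) (a : List (Fin (n + 1))) :
    ofBlocks (headBlocks w x) (List.ofFn σ ++ a.map σ) = List.ofFn σ ++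
      (w ++ a.zipIdx.flatMap fun q ↦ q.1 :: (x q.2).map (·.getD q.1)).map σ := by
  have block (i : ℕ) :
      headBlocks w x (n + 1 + i) = (x i).map (Option.elim · (n + 1 + i) Fin.val) := by
    rw [headBlocks, if_neg (by omega), if_neg (by omega), Nat.add_sub_cancel_left]
  have decode (i : ℕ) (t : Fin (n + 1)) (o : Option (Fin (n + 1))) :
      ((List.ofFn σ ++ a.map σ).take (n + 1 + i)).getD (o.elim (n + 1 + i) Fin.val) (σ t) =
        σ (o.getD t) := by
    cases o with
    | none => exact List.getD_eq_default _ _ (by simp)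
    | some s =>
      have hs : (s : ℕ) ≤ n := Nat.le_of_lt_succ s.2
      simp [List.getElem?_append, -List.ofFn_succ, hs, Nat.lt_add_right i s.2]
  have head := ofBlocks_headBlocks_apply_ofFn w x σ
  change substBlocks _ _ = _ at head ⊢
  rw [substBlocks_append, head, List.zipIdx_eq_map_add]
  simp only [List.zipIdx_map, List.flatMap_map, List.map_flatMap, List.map_append, List.map_cons,
    List.map_map, List.length_ofFn, List.append_assoc, Prod.map_fst, Prod.map_snd, id, block,
    decode, Function.comp_def]

end headBlocks

/-- The colour of `P(VX)` depends only on `V`, for all `V` of length `n` over `λ₀, …, λ_{K-1}` and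
all `X` over the letters of `V`. -/
def StabilizesAt {C : Type*} (P : OmegaWord) (χ : List ℕ → C) (K n : ℕ) : Prop :=
  ∀ v X : List ℕ, v.length = n → (∀ i ∈ v, i < K) → X ⊆ v → χ (P (v ++ X)) = χ (P v)

theorem exists_stabilizesAt {C : Type*} [Finite C] (χ : List ℕ → C) (K n : ℕ) :
    ∃ Q : OmegaWord, (∀ u, u.length < n → Q u = u) ∧ Q.StabilizesAt χ K n := by
  cases n with
  | zero =>
    refine ⟨OmegaWord.id, fun _ _ ↦ rfl, fun v X hv _ hX ↦ ?_⟩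
    obtain rfl := List.length_eq_zero_iff.1 hv
    rw [List.subset_nil.1 hX, List.append_nil]
  | succ n =>
    obtain ⟨w, x, c, hc⟩ := exists_leftVariableWords_monochromatic
      fun (T : List (Fin (n + 1))) (σ : Fin (n + 1) → Fin K) ↦
        χ (List.ofFn (fun i ↦ (σ i : ℕ)) ++ T.map fun i ↦ (σ i : ℕ))
    refine ⟨ofBlocks (headBlocks w x),
      fun u ↦ ofBlocks_headBlocks_apply_of_length_lt w x, fun v X hv hvK hX ↦ ?_⟩
    let σ (i : Fin (n + 1)) : Fin K := ⟨v[i], hvK _ (List.getElem_mem _)⟩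
    have ofFn_σ : List.ofFn (fun i ↦ (σ i : ℕ)) = v :=
      List.ext_getElem (by simp [hv]) (by simp [σ, -List.ofFn_succ])
    have color (Y : List ℕ) (hY : Y ⊆ v) : χ (ofBlocks (headBlocks w x) (v ++ Y)) = c σ := by
      obtain ⟨a, rfl⟩ : Y ∈ Set.range (List.map fun i ↦ (σ i : ℕ)) := by
        rw [Set.range_list_map]
        intro y hy
        rw [← List.mem_ofFn', ofFn_σ]
        exact hY hy
      rw [← ofFn_σ, ofBlocks_headBlocks_apply_ofFn_append, ← hc a]
    rw [color X hX, ← color [] (List.nil_subset v), List.append_nil]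

theorem StabilizesAt.comp {C : Type*} {P R : OmegaWord} {χ : List ℕ → C} {K n : ℕ}
    (hP : P.StabilizesAt χ K n) (hR : ∀ u, u.length = n → R u = u) :
    (P.comp R).StabilizesAt χ K n := by
  intro v X hv hvK hX
  obtain ⟨X', hX'⟩ := R.apply_isPrefix v X
  have hX'v : X' ⊆ v := calc
    X' ⊆ R (v ++ X) := hX' ▸ List.subset_append_right _ _
    _ ⊆ v ++ X := R.apply_subset _
    _ ⊆ v := List.append_subset.2 ⟨List.Subset.refl v, hX⟩
  change χ (P (R (v ++ X))) = χ (P (R v))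
  rw [← hX', hR v hv]
  exact hP v X' hv hvK hX'v

theorem exists_fusion_sequence {C : Type*} [Finite C] (χ : List ℕ → C) (K : ℕ) :
    ∃ S : ℕ → OmegaWord, (∀ m u, u.length < m → S (m + 1) u = S m u) ∧
      ∀ n m, n < m → (S m).StabilizesAt χ K n := by
  have extend (n : ℕ) (P : OmegaWord) : ∃ Q : OmegaWord, (∀ u, u.length < n → Q u = u) ∧
      (P.comp Q).StabilizesAt χ K n :=
    exists_stabilizesAt (fun u ↦ χ (P u)) K n
  choose Q hQ_fix hQ_stab using extend
  let S : ℕ → OmegaWord := Nat.rec OmegaWord.id fun n P ↦ P.comp (Q n P)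
  refine ⟨S, fun m u hu ↦ congrArg (S m) (hQ_fix m (S m) u hu), fun n m hnm ↦ ?_⟩
  induction m, hnm using Nat.le_induction with
  | base => exact hQ_stab n (S n)
  | succ m hnm ih => exact ih.comp fun u hu ↦ hQ_fix m (S m) u (hu.trans_lt hnm)

theorem exists_forall_stabilizesAt {C : Type*} [Finite C] (χ : List ℕ → C) (K : ℕ) :
    ∃ P : OmegaWord, ∀ n, P.StabilizesAt χ K n := by
  obtain ⟨S, hS, stab⟩ := exists_fusion_sequence χ K
  refine ⟨limit S hS, fun n v X hv hvK hX ↦ ?_⟩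
  have length_append : (v ++ X).length < n + X.length + 1 := by simp [hv]
  rw [limit_apply length_append, limit_apply (m := n + X.length + 1) (by omega)]
  exact stab n _ (by omega) v X hv hvK hX

end OmegaWord

theorem IsPWord0.exists_eq_append_cons {k : ℕ} {u : List ℕ} (hu : IsPWord0 (k + 1) u) :
    ∃ V X, IsPWord0 k V ∧ u = V ++ k :: X := by
  obtain ⟨lt, mem, first⟩ := hu
  obtain ⟨V, X, rfl, k_notMem⟩ := List.eq_append_cons_of_mem (mem k (Nat.lt_succ_self k))
  have earlier (i j p : ℕ) (hij : i < j) (hp : p ≤ V.length) (hpj : (V ++ k :: X)[p]? = some j) :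
      ∃ q, ∃ h : q < V.length, q < p ∧ V[q] = i := by
    obtain ⟨hp', hpj⟩ := List.getElem?_eq_some_iff.1 hpj
    obtain ⟨q, hqp, hqi⟩ := first i j hij ⟨p, hp'⟩ hpj
    have hqV : q.1 < V.length := lt_of_lt_of_le hqp hp
    exact ⟨q, hqV, hqp, by simpa [List.getElem_append_left hqV] using hqi⟩
  refine ⟨V, X, ⟨fun i hi ↦ ?_, fun i hi ↦ ?_, fun i j hij p hp ↦ ?_⟩, rfl⟩
  · exact lt_of_le_of_ne (Nat.le_of_lt_succ (lt i (by simp [hi]))) fun h ↦ k_notMem (h ▸ hi)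
  · obtain ⟨q, hq, -, rfl⟩ := earlier i k V.length hi le_rfl (by simp)
    exact List.getElem_mem hq
  · obtain ⟨q, hq, hqp, hqi⟩ := earlier i j p hij p.2.le <|
      (List.getElem?_append_left p.2).trans (List.getElem?_eq_some_iff.2 ⟨p.2, hp⟩)
    exact ⟨⟨q, hq⟩, hqp, hqi⟩

namespace OmegaWord

theorem exists_monochromatic {C : Type*} [Finite C] (k : ℕ) (χ : List ℕ → C) :
    ∃ (P : OmegaWord) (c : C), ∀ u, IsPWord0 k u → χ (P u) = c := by
  induction k generalizing χ with
  | zero =>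
    refine ⟨OmegaWord.id, χ [], fun u hu ↦ congrArg χ ?_⟩
    exact List.eq_nil_iff_forall_not_mem.2 fun i hi ↦ Nat.not_lt_zero i (hu.1 i hi)
  | succ k ih =>
    obtain ⟨P, stab⟩ := exists_forall_stabilizesAt χ (k + 1)
    obtain ⟨Q, c, hc⟩ := ih fun V ↦ χ (P (V ++ [k]))
    refine ⟨P.comp Q, c, fun u hu ↦ ?_⟩
    obtain ⟨V, X, hV, rfl⟩ := hu.exists_eq_append_cons
    obtain ⟨X', hX', hQ⟩ := Q.exists_apply_append_cons V k X
    have head_lt (i : ℕ) (hi : i ∈ Q V ++ [k]) : i < k + 1 := by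
      rcases List.mem_append.1 hi with h | h
      · exact (hV.1 i (Q.apply_subset V h)).trans (Nat.lt_succ_self k)
      · exact (List.mem_singleton.1 h).trans_lt (Nat.lt_succ_self k)
    have letters_mem (i : ℕ) (hi : i ≤ k) : i ∈ Q V ++ [k] := by
      rcases hi.lt_or_eq with h | rfl
      · exact List.mem_append_left _ (Q.subset_apply V (hV.2.1 i h))
      · simp
    have tail_subset : X' ⊆ Q V ++ [k] := fun i hi ↦
      letters_mem i <| Nat.le_of_lt_succ <| hu.1 i (hX' hi)
    calc χ (P (Q (V ++ k :: X))) = χ (P ((Q V ++ [k]) ++ X')) := by simp [hQ]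
      _ = χ (P (Q V ++ [k])) := stab _ _ _ rfl head_lt tail_subset
      _ = c := hc V hV

theorem apply_range_isPrefix (P : OmegaWord) {m n : ℕ} (hmn : m ≤ n) :
    P (List.range m) <+: P (List.range n) := by
  obtain ⟨d, rfl⟩ := Nat.exists_eq_add_of_le hmn
  rw [List.range_add]
  exact P.apply_isPrefix _ _

theorem apply_range_concat_isPrefix (P : OmegaWord) (n : ℕ) :
    P (List.range n) ++ [n] <+: P (List.range (n + 1)) := by
  rw [List.range_succ]
  exact P.concat_isPrefix _ n []

theorem length_apply_range_lt_succ (P : OmegaWord) (n : ℕ) :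
    (P (List.range n)).length < (P (List.range (n + 1))).length := by
  simpa using (P.apply_range_concat_isPrefix n).length_le

theorem le_length_apply_range (P : OmegaWord) (n : ℕ) : n ≤ (P (List.range n)).length :=
  (strictMono_nat_of_lt_succ P.length_apply_range_lt_succ).le_apply

/-- The sequence of parameters of an `ω`-parameter word. Its first `p + 1` entries occur already in
`P(λ₀ … λ_p)`, which has length greater than `p`. -/
def toSeq (P : OmegaWord) (p : ℕ) : ℕ :=
  (P (List.range (p + 1))).getD p 0

theorem toSeq_eq_getElem (P : OmegaWord) {n p : ℕ} (hp : p < (P (List.range n)).length) :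
    P.toSeq p = (P (List.range n))[p] := by
  have hp' : p < (P (List.range (p + 1))).length := P.le_length_apply_range (p + 1)
  rw [toSeq, List.getD_eq_getElem _ _ hp']
  rcases le_total (p + 1) n with h | h
  · exact (P.apply_range_isPrefix h).getElem hp'
  · exact ((P.apply_range_isPrefix h).getElem hp).symm

theorem toSeq_lt (P : OmegaWord) {n p : ℕ} (hp : p < (P (List.range n)).length) :
    P.toSeq p < n := by
  rw [P.toSeq_eq_getElem hp]
  exact List.mem_range.1 (P.apply_subset _ (List.getElem_mem hp))

theorem toSeq_length_apply_range (P : OmegaWord) (n : ℕ) :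
    P.toSeq (P (List.range n)).length = n := by
  rw [P.toSeq_eq_getElem (P.length_apply_range_lt_succ n),
    ← (P.apply_range_concat_isPrefix n).getElem (by simp), List.getElem_concat_length rfl]

theorem infPW0_toSeq (P : OmegaWord) : InfPW0 P.toSeq := by
  refine ⟨fun i ↦ ⟨_, P.toSeq_length_apply_range i⟩, fun i j hij p hp ↦
    ⟨_, lt_of_not_ge fun hle ↦ ?_, P.toSeq_length_apply_range i⟩⟩
  have : P.toSeq p < i + 1 := P.toSeq_lt (hle.trans_lt (P.length_apply_range_lt_succ i))
  omega

theorem substInf0_toSeq (P : OmegaWord) (u : List ℕ) (h : ∃ p, u.length ≤ P.toSeq p) :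
    substInf0 P.toSeq u h = P u := by
  have truncation : Nat.find h = (P (List.range u.length)).length :=
    (Nat.find_eq_iff h).2 ⟨(P.toSeq_length_apply_range _).ge, fun p hp ↦ (P.toSeq_lt hp).not_ge⟩
  have prefix_eq : (List.range (P (List.range u.length)).length).map P.toSeq =
      P (List.range u.length) :=
    List.ext_getElem (by simp) fun p _ hp ↦ by simp [P.toSeq_eq_getElem hp]
  calc substInf0 P.toSeq u h
      = ((List.range (P (List.range u.length)).length).map P.toSeq).map (u.getD · 0) := by
        rw [substInf0, truncation, List.map_map, Function.comp_def]
    _ = P ((List.range u.length).map (u.getD · 0)) := by rw [prefix_eq, P.map_comm]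
    _ = P u := by rw [map_getD_range]

end OmegaWord

/-- The infinitary dual Ramsey theorem (special case of Carlson–Simpson): for every
finite colouring of all finite-length `k`-parameter words over the empty alphabet there
is an infinite `ω`-parameter word `W` such that `{W(U) : U a k-parameter word}` is
monochromatic. -/
theorem carlson_simpson_special (k r : ℕ) (χ : List ℕ → Fin r) :
    ∃ W : ℕ → ℕ, InfPW0 W ∧ ∃ c : Fin r,
      ∀ u : List ℕ, IsPWord0 k u → ∀ h : ∃ p, u.length ≤ W p,
        χ (substInf0 W u h) = c := by
  obtain ⟨P, c, hc⟩ := OmegaWord.exists_monochromatic k χ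
  refine ⟨P.toSeq, P.infPW0_toSeq, c, fun u hu h ↦ ?_⟩
  rw [P.substInf0_toSeq]
  exact hc u hu
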